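/- arXiv:2303.02557 — 2 statements merged into one kernel-verified Lean document; each statement's English description precedes it below -/
import Mathlib

section
/- Let Q be the optimal Q-function for reward r, let f : ℝ → ℝ satisfy: (1) f is convex; (2i) f(x+y) ≤ f(x) + f(y) for all x, y; (2ii) f(γx) ≤ γ·f(x) for all x, and let Q̃ be the optimal Q-function for reward (s,a) ↦ f(r(s,a)). Define V_f(s) = max_{a∈A} f(Q(s,a)), let C be the optimal Q-function for reward r_C(s,a) = f(r(s,a)) + γ·∑_{s'} p(s'|s,a)·V_f(s') − f(Q(s,a)), and let π_f be the greedy policy π_f(s) ∈ argmax_{a∈A} f(Q(s,a)). Let Q̃^{π_f} be the value of π_f on the transformed task, i.e. the function satisfying Q̃^{π_f}(s,a) = f(r(s,a)) + γ·∑_{s'} p(s'|s,a)·Q̃^{π_f}(s', π_f(s')), and let D satisfy D(s,a) = r_D(s,a) + γ·∑_{s'} p(s'|s,a)·D(s', π_f(s')) where r_D(s,a) = γ·∑_{s'} p(s'|s,a)·[max_{b∈A}(f(Q(s',b)) + C(s',b)) − f(Q(s', π_f(s')))]. Then for all (s,a): Q̃(s,a) − Q̃^{π_f}(s,a) ≤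 D(s,a). -/
/-!
Everything rests on a comparison principle (`nonneg_of_bellman`): if
`Z(s,a) ≥ γ ∑ p(s'|s,a) Z(s', σ(s'))` for some policy `σ`, then the minimum `m` of `Z` satisfies
`m ≥ γ m`, so `Z ≥ 0`. Applied to the difference of two functions with `σ` greedy for one of them,
it says that sub- and supersolutions of the Bellman optimality equation are ordered
(`le_of_sub_super`).

The conditions on `f` together with Jensen's inequality make `f ∘ Q` a subsolution for the reward
`f ∘ r`, so `f ∘ Q ≤ Qt`. By the definition of `rC`, `f ∘ Q + C` is a supersolution for the same
reward, so `Qt ≤ f ∘ Q + C`. The regret `X = Qt - Qpf` satisfies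
`X(s,a) = γ ∑ p(s'|s,a) [max Qt(s',·) - Qt(s',πf s') + X(s',πf s')]`, and the two bounds on `Qt`
turn this into `X ≤ rD + γ ∑ p X(·,πf ·)`. The comparison principle for `D - X` concludes.
-/

open Finset

/-- Maximum of a real-valued function over a nonempty finite action set. -/
noncomputable def amax {A : Type*} [Fintype A] [Nonempty A] (g : A → ℝ) : ℝ :=
  Finset.univ.sup' Finset.univ_nonempty g

section Amax

variable {A : Type*} [Fintype A] [Nonempty A]

lemma le_amax (g : A → ℝ) (a : A) : g a ≤ amax g :=
  Finset.le_sup' g (Finset.mem_univ a)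

lemma amax_le {g : A → ℝ} {c : ℝ} (h : ∀ a, g a ≤ c) : amax g ≤ c :=
  Finset.sup'_le _ _ fun a _ => h a

lemma exists_amax_eq (g : A → ℝ) : ∃ a, amax g = g a := by
  obtain ⟨a, -, ha⟩ := Finset.exists_mem_eq_sup' Finset.univ_nonempty g
  exact ⟨a, ha⟩

end Amax

section Comparison

variable {S A : Type*} [Fintype S] [Fintype A] [Nonempty S] [Nonempty A]
  {p : S → A → S → ℝ} {γ : ℝ}

lemma nonneg_of_bellman (hp_nonneg : ∀ s a s', 0 ≤ p s a s')
    (hp_sum : ∀ s a, ∑ s', p s a s' = 1) (hγ0 : 0 < γ) (hγ1 : γ < 1)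
    (Z : S → A → ℝ) (σ : S → A)
    (hZ : ∀ s a, γ * ∑ s', p s a s' * Z s' (σ s') ≤ Z s a) (s : S) (a : A) :
    0 ≤ Z s a := by
  obtain ⟨⟨s₀, a₀⟩, hmin⟩ := Finite.exists_min (fun x : S × A => Z x.1 x.2)
  have hsum : Z s₀ a₀ ≤ ∑ s', p s₀ a₀ s' * Z s' (σ s') := by
    calc Z s₀ a₀ = ∑ s', p s₀ a₀ s' * Z s₀ a₀ := by
          rw [← Finset.sum_mul, hp_sum, one_mul]
      _ ≤ _ := Finset.sum_le_sum fun s' _ =>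
          mul_le_mul_of_nonneg_left (hmin (s', σ s')) (hp_nonneg _ _ _)
  have hm : 0 ≤ Z s₀ a₀ := by
    nlinarith [hZ s₀ a₀, mul_le_mul_of_nonneg_left hsum hγ0.le]
  exact hm.trans (hmin (s, a))

lemma sum_kernel_le (hp_nonneg : ∀ s a s', 0 ≤ p s a s') (hγ0 : 0 < γ)
    (s : S) (a : A) {u v : S → ℝ} (h : ∀ s', u s' ≤ v s') :
    γ * ∑ s', p s a s' * u s' ≤ γ * ∑ s', p s a s' * v s' :=
  mul_le_mul_of_nonneg_left (Finset.sum_le_sum fun s' _ =>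
    mul_le_mul_of_nonneg_left (h s') (hp_nonneg _ _ _)) hγ0.le

/-- A subsolution `U` of the Bellman optimality equation for reward `R` lies below any
supersolution `W`. -/
lemma le_of_sub_super (hp_nonneg : ∀ s a s', 0 ≤ p s a s')
    (hp_sum : ∀ s a, ∑ s', p s a s' = 1) (hγ0 : 0 < γ) (hγ1 : γ < 1)
    {R U W : S → A → ℝ}
    (hU : ∀ s a, U s a ≤ R s a + γ * ∑ s', p s a s' * amax (fun b => U s' b))
    (hW : ∀ s a, R s a + γ * ∑ s', p s a s' * amax (fun b => W s' b) ≤ W s a)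
    (s : S) (a : A) : U s a ≤ W s a := by
  -- `σ` is greedy for `U`, so that `amax W - amax U ≥ (W - U)(σ)`.
  choose σ hσ using fun s' => exists_amax_eq (fun b => U s' b)
  refine sub_nonneg.1 (nonneg_of_bellman hp_nonneg hp_sum hγ0 hγ1
    (fun s a => W s a - U s a) σ (fun s a => ?_) s a)
  have h := sum_kernel_le hp_nonneg hγ0 s a
    (u := fun s' => W s' (σ s') - U s' (σ s'))
    (v := fun s' => amax (fun b => W s' b) - amax (fun b => U s' b))
    (fun s' => by
      have := le_amax (fun b => W s' b) (σ s')
      simp only [hσ]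
      linarith)
  have h1 := hU s a
  have h2 := hW s a
  simp only [mul_sub, Finset.sum_sub_distrib] at h ⊢
  linarith

end Comparison

/-- **Regret bound for the zero-shot greedy policy, convex conditions, standard RL (Lemma 4.2).** -/
theorem convex_conditions_regret_standard_rl
    {S A : Type*} [Fintype S] [Fintype A] [Nonempty S] [Nonempty A]
    (p : S → A → S → ℝ)
    (hp_nonneg : ∀ s a s', 0 ≤ p s a s')
    (hp_sum : ∀ s a, ∑ s', p s a s' = 1)
    (γ : ℝ) (hγ0 : 0 < γ) (hγ1 : γ < 1)
    (r : S → A → ℝ)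
    -- Q is the optimal Q-function for reward r
    (Q : S → A → ℝ)
    (hQ : ∀ s a, Q s a = r s a + γ * ∑ s', p s a s' * amax (fun a' => Q s' a'))
    -- the transformation function f and its conditions
    (f : ℝ → ℝ)
    (hf_convex : ConvexOn ℝ Set.univ f)
    (hf_subadd : ∀ x y, f (x + y) ≤ f x + f y)
    (hf_subhom : ∀ x, f (γ * x) ≤ γ * f x)
    -- Q̃ is the optimal Q-function for the transformed reward f ∘ r
    (Qt : S → A → ℝ)
    (hQt : ∀ s a, Qt s a = f (r s a) + γ * ∑ s', p s a s' * amax (fun a' => Qt s' a'))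
    -- V_f, the auxiliary reward r_C, and C the optimal Q-function for r_C
    (Vf : S → ℝ)
    (hVf : ∀ s, Vf s = amax (fun a => f (Q s a)))
    (rC : S → A → ℝ)
    (hrC : ∀ s a, rC s a = f (r s a) + γ * (∑ s', p s a s' * Vf s') - f (Q s a))
    (C : S → A → ℝ)
    (hC : ∀ s a, C s a = rC s a + γ * ∑ s', p s a s' * amax (fun a' => C s' a'))
    -- π_f is the greedy policy w.r.t. f(Q(s,·))
    (πf : S → A)
    (hπf : ∀ s a, f (Q s a) ≤ f (Q s (πf s)))
    -- Q̃^{π_f} is the value of π_f on the transformed task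
    (Qpf : S → A → ℝ)
    (hQpf : ∀ s a, Qpf s a = f (r s a) + γ * ∑ s', p s a s' * Qpf s' (πf s'))
    -- the auxiliary reward r_D and the value D of π_f in the task with reward r_D
    (rD : S → A → ℝ)
    (hrD : ∀ s a, rD s a = γ * ∑ s', p s a s' *
      (amax (fun b => f (Q s' b) + C s' b) - f (Q s' (πf s'))))
    (D : S → A → ℝ)
    (hD : ∀ s a, D s a = rD s a + γ * ∑ s', p s a s' * D s' (πf s')) :
    ∀ s a, Qt s a - Qpf s a ≤ D s a := by
  have hlow : ∀ s a, f (Q s a) ≤ Qt s a := by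
    refine le_of_sub_super (R := fun s a => f (r s a)) (U := fun s a => f (Q s a))
      hp_nonneg hp_sum hγ0 hγ1 (fun s a => ?_) (fun s a => (hQt s a).ge)
    have hJ : f (∑ s', p s a s' * amax (fun a' => Q s' a')) ≤
        ∑ s', p s a s' * f (amax (fun a' => Q s' a')) := by
      simpa only [smul_eq_mul] using hf_convex.map_sum_le (t := Finset.univ) (w := p s a)
        (p := fun s' => amax (fun a' => Q s' a'))
        (fun s' _ => hp_nonneg s a s') (hp_sum s a) (fun _ _ => Set.mem_univ _)
    -- `f` need not be monotone, but the maximum of `Q s'` is attained at some action.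
    have hmax := sum_kernel_le hp_nonneg hγ0 s a
      (u := fun s' => f (amax (fun a' => Q s' a')))
      (v := fun s' => amax (fun b => f (Q s' b)))
      (fun s' => by
        obtain ⟨b, hb⟩ := exists_amax_eq (fun a' => Q s' a')
        simp only [hb]
        exact le_amax (fun b => f (Q s' b)) b)
    calc f (Q s a) = f (r s a + γ * ∑ s', p s a s' * amax (fun a' => Q s' a')) := by
          rw [← hQ]
      _ ≤ f (r s a) + γ * f (∑ s', p s a s' * amax (fun a' => Q s' a')) :=
          (hf_subadd _ _).trans (by gcongr; exact hf_subhom _)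
      _ ≤ f (r s a) + γ * ∑ s', p s a s' * f (amax (fun a' => Q s' a')) := by gcongr
      _ ≤ _ := by gcongr
  have hup : ∀ s a, Qt s a ≤ f (Q s a) + C s a := by
    refine le_of_sub_super (R := fun s a => f (r s a)) (W := fun s a => f (Q s a) + C s a)
      hp_nonneg hp_sum hγ0 hγ1 (fun s a => (hQt s a).le) (fun s a => ?_)
    have h := sum_kernel_le hp_nonneg hγ0 s a
      (u := fun s' => amax (fun b => f (Q s' b) + C s' b))
      (v := fun s' => Vf s' + amax (fun b => C s' b))
      (fun s' => amax_le fun b => by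
        rw [hVf]
        exact add_le_add (le_amax (fun b => f (Q s' b)) b) (le_amax (fun b => C s' b) b))
    have h1 := hC s a
    have h2 := hrC s a
    simp only [mul_add, Finset.sum_add_distrib] at h ⊢
    linarith
  intro s a
  refine sub_nonneg.1 (nonneg_of_bellman hp_nonneg hp_sum hγ0 hγ1
    (fun s a => D s a - (Qt s a - Qpf s a)) πf (fun s a => ?_) s a)
  have h := sum_kernel_le hp_nonneg hγ0 s a
    (u := fun s' => amax (fun b => Qt s' b) - Qt s' (πf s'))
    (v := fun s' => amax (fun b => f (Q s' b) + C s' b) - f (Q s' (πf s')))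
    (fun s' => sub_le_sub
      (amax_le fun b => (hup s' b).trans (le_amax (fun b => f (Q s' b) + C s' b) b))
      (hlow s' (πf s')))
  have h1 := hD s a
  have h2 := hrD s a
  have h3 := hQt s a
  have h4 := hQpf s a
  simp only [mul_sub, Finset.sum_sub_distrib] at h h2 ⊢
  linarith
end

section
/- Let Q be the optimal soft Q-function for reward r, and let f : ℝ → ℝ satisfy: (1) f is concave; (2i) f(x+y) ≥ f(x) + f(y) for all x, y; (2ii) f(γx) ≥ γ·f(x) for all x; (3) f(log ∑_{a} π₀(a|s)·exp 𝒬(s,a)) ≥ log ∑_{a} π₀(a|s)·exp f(𝒬(s,a)) for every function 𝒬 : S × A → ℝ and every s ∈ S. Define V_f(s) = log ∑_{a} π₀(a|s)·exp f(Q(s,a)) and r̂_C(s,a) = f(Q(s,a)) − f(r(s,a)) − γ·∑_{s'} p(s'|s,a)·V_f(s'), and let Ĉ be the function satisfying Ĉ(s,a) = r̂_C(s,a) + γ·∑_{s'} p(s'|s,a)·max_{a'∈A} Ĉ(s',a'). If Q̃ is the optimal soft Q-function for the transformed reward (s,a) ↦ f(r(s,a)), then for all (s,a): f(Q(s,a))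 − Ĉ(s,a) ≤ Q̃(s,a) ≤ f(Q(s,a)). -/
/-!
Both bounds come from a maximum principle for the discounted Bellman operator: if every uniform
upper bound `c` of a function `D` on the finite set `S × A` improves to `γ * c`, then `D ≤ 0`
(take `c` to be the maximum of `D`; see `nonpos_of_discounted_bound`). The improvement uses that
the soft value is monotone and commutes with adding constants (`softV_le_add`).

* Upper bound, `D = Q̃ - f ∘ Q`: if `Q̃ ≤ f ∘ Q + c`, the soft Bellman equation for `Q̃`, the
  log-sum-exp condition, Jensen's inequality for `f`, `γ * f x ≤ f (γ * x)` and superadditivity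
  give `Q̃ ≤ f ∘ Q + γ * c`.
* Lower bound, `D = f ∘ Q - Ĉ - Q̃`: the definition of `r̂_C` turns the fixed-point equations into
  `D = γ * ∑ p * (V_f - max Ĉ - softV Q̃)`, and a bound `D ≤ c` makes each bracket at most `c`.
-/

open Finset

/-- The soft (log-sum-exp) value of `g` under the prior action distribution `π0`. -/
noncomputable def softV {A : Type*} [Fintype A] (π0 : A → ℝ) (g : A → ℝ) : ℝ :=
  Real.log (∑ a, π0 a * Real.exp (g a))

/-- Monotonicity of the soft value combined with the fact that adding a constant to the function
adds it to the soft value. -/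
lemma softV_le_add {A : Type*} [Fintype A] [Nonempty A] (w : A → ℝ) (hw : ∀ a, 0 < w a)
    (g h : A → ℝ) (c : ℝ) (hgh : ∀ a, g a ≤ h a + c) : softV w g ≤ softV w h + c := by
  have pos : ∀ k : A → ℝ, 0 < ∑ a, w a * Real.exp (k a) := fun k =>
    Finset.sum_pos (fun a _ => mul_pos (hw a) (Real.exp_pos _)) Finset.univ_nonempty
  unfold softV
  rw [← Real.log_exp c, ← Real.log_mul (pos h).ne' (Real.exp_pos _).ne']
  apply Real.log_le_log (pos g)
  rw [Finset.sum_mul]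
  refine Finset.sum_le_sum fun a _ => ?_
  rw [mul_assoc, ← Real.exp_add]
  exact mul_le_mul_of_nonneg_left (Real.exp_le_exp.mpr (hgh a)) (hw a).le

/-- Maximum principle: the maximum `c` of `D` satisfies `c ≤ γ * c`, hence `c ≤ 0`. -/
lemma nonpos_of_discounted_bound {S A : Type*} [Finite S] [Finite A] [Nonempty S] [Nonempty A]
    (γ : ℝ) (hγ1 : γ < 1) (D : S → A → ℝ)
    (hD : ∀ c, (∀ s a, D s a ≤ c) → ∀ s a, D s a ≤ γ * c) (s : S) (a : A) : D s a ≤ 0 := by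
  obtain ⟨⟨s₀, a₀⟩, hmax⟩ := Finite.exists_max (fun x : S × A => D x.1 x.2)
  have hle : ∀ s a, D s a ≤ D s₀ a₀ := fun s a => hmax (s, a)
  have h := hD _ hle s₀ a₀
  have : D s₀ a₀ ≤ 0 := by nlinarith
  exact (hle s a).trans this

lemma weighted_sum_le_add {S : Type*} [Fintype S] (q : S → ℝ) (hq : ∀ s, 0 ≤ q s)
    (hq1 : ∑ s, q s = 1) (u v : S → ℝ) (c : ℝ) (h : ∀ s, u s ≤ v s + c) :
    ∑ s, q s * u s ≤ ∑ s, q s * v s + c := by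
  calc ∑ s, q s * u s ≤ ∑ s, q s * (v s + c) :=
        Finset.sum_le_sum fun s _ => mul_le_mul_of_nonneg_left (h s) (hq s)
    _ = ∑ s, q s * v s + c := by
        simp only [mul_add, Finset.sum_add_distrib, ← Finset.sum_mul, hq1, one_mul]

/-- **Concave conditions, entropy-regularized RL (Lemma 5.3).** -/
theorem concave_conditions_entreg_rl
    {S A : Type*} [Fintype S] [Fintype A] [Nonempty S] [Nonempty A]
    (p : S → A → S → ℝ)
    (hp_nonneg : ∀ s a s', 0 ≤ p s a s')
    (hp_sum : ∀ s a, ∑ s', p s a s' = 1)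
    (γ : ℝ) (hγ0 : 0 < γ) (hγ1 : γ < 1)
    -- prior policy
    (π0 : S → A → ℝ)
    (hπ0_pos : ∀ s a, 0 < π0 s a)
    (hπ0_sum : ∀ s, ∑ a, π0 s a = 1)
    (r : S → A → ℝ)
    -- Q is the optimal soft Q-function for reward r
    (Q : S → A → ℝ)
    (hQ : ∀ s a, Q s a = r s a + γ * ∑ s', p s a s' * softV (π0 s') (fun a' => Q s' a'))
    -- the transformation function f and its conditions
    (f : ℝ → ℝ)
    (hf_concave : ConcaveOn ℝ Set.univ f)
    (hf_superadd : ∀ x y, f x + f y ≤ f (x + y))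
    (hf_superhom : ∀ x, γ * f x ≤ f (γ * x))
    (hf_lse : ∀ (𝒬 : S → A → ℝ) (s : S),
      softV (π0 s) (fun a => f (𝒬 s a)) ≤ f (softV (π0 s) (fun a => 𝒬 s a)))
    -- V_f, the auxiliary reward r̂_C, and the fixed point Ĉ
    (Vf : S → ℝ)
    (hVf : ∀ s, Vf s = softV (π0 s) (fun a => f (Q s a)))
    (rCh : S → A → ℝ)
    (hrCh : ∀ s a, rCh s a = f (Q s a) - f (r s a) - γ * (∑ s', p s a s' * Vf s'))
    (Ch : S → A → ℝ)
    (hCh : ∀ s a, Ch s a = rCh s a + γ * ∑ s', p s a s' * amax (fun a' => Ch s' a'))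
    -- Q̃ is the optimal soft Q-function for the transformed reward f ∘ r
    (Qt : S → A → ℝ)
    (hQt : ∀ s a, Qt s a = f (r s a) + γ * ∑ s', p s a s' * softV (π0 s') (fun a' => Qt s' a')) :
    ∀ s a, f (Q s a) - Ch s a ≤ Qt s a ∧ Qt s a ≤ f (Q s a) := by
  have upper := nonpos_of_discounted_bound γ hγ1 (fun s a => Qt s a - f (Q s a)) <| by
    intro c hc s a
    have hV : ∀ s', softV (π0 s') (fun a' => Qt s' a')
        ≤ f (softV (π0 s') (fun a' => Q s' a')) + c := fun s' =>
      (softV_le_add _ (hπ0_pos s') _ (fun a' => f (Q s' a')) c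
        (fun a' => by linarith [hc s' a'])).trans (by linarith [hf_lse Q s'])
    have hsum := weighted_sum_le_add (p s a) (hp_nonneg s a) (hp_sum s a) _ _ c hV
    have jensen := hf_concave.le_map_sum (t := Finset.univ) (w := p s a)
      (p := fun s' => softV (π0 s') (fun a' => Q s' a'))
      (fun s' _ => hp_nonneg s a s') (hp_sum s a) (fun _ _ => Set.mem_univ _)
    simp only [smul_eq_mul] at jensen
    have hscaled := mul_le_mul_of_nonneg_left (hsum.trans (add_le_add_left jensen c)) hγ0.le
    have hhom := hf_superhom (∑ s', p s a s' * softV (π0 s') (fun a' => Q s' a'))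
    have hadd := hf_superadd (r s a)
      (γ * ∑ s', p s a s' * softV (π0 s') (fun a' => Q s' a'))
    rw [← hQ s a] at hadd
    have := hQt s a
    linarith
  have lower := nonpos_of_discounted_bound γ hγ1 (fun s a => f (Q s a) - Ch s a - Qt s a) <| by
    intro c hc s a
    have hV : ∀ s', Vf s' ≤
        (softV (π0 s') (fun a' => Qt s' a') + amax (fun a' => Ch s' a')) + c := by
      intro s'
      rw [hVf, add_assoc]
      refine softV_le_add _ (hπ0_pos s') _ _ _ fun a' => ?_
      have hmax : Ch s' a' ≤ amax (fun a' => Ch s' a') :=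
        Finset.le_sup' (fun a' => Ch s' a') (Finset.mem_univ a')
      linarith [hc s' a']
    have hsum := weighted_sum_le_add (p s a) (hp_nonneg s a) (hp_sum s a) _ _ c hV
    simp only [mul_add, Finset.sum_add_distrib] at hsum
    have hscaled := mul_le_mul_of_nonneg_left hsum hγ0.le
    have := hQt s a
    have := hCh s a
    have := hrCh s a
    linarith
  intro s a
  exact ⟨by linarith [lower s a], by linarith [upper s a]⟩
end
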